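/- Let 1 ≤ p < ∞ and 0 < s < 1. There is a constant W_{N,p} > 0 such that for every ball B_r(x_0) and every u ∈ C^∞_0(R^N), ‖u − av(u; B_r(x_0))‖^p_{L^p(B_r(x_0))} ≤ W_{N,p} · s(1−s) · r^{sp} · ∬_{B_r(x_0)×R^N} |u(x)−u(y)|^p/|x−y|^{N+sp} dx dy. -/

import Mathlib

open MeasureTheory Metric Filter
open scoped ENNReal

noncomputable section

abbrev Euc (N : ℕ) := EuclideanSpace ℝ (Fin N)

/-- The (p-th power of the) Gagliardo–Slobodeckii seminorm on `ℝ^N`. -/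
def gag (N : ℕ) (p s : ℝ) (u : Euc N → ℝ) : ℝ :=
  ∫ z : Euc N × Euc N, |u z.1 - u z.2| ^ p / ‖z.1 - z.2‖ ^ ((N : ℝ) + s * p)

/-- `u ∈ C^∞_0(Ω)`: smooth with compact support contained in `Ω`. -/
def TestOn {N : ℕ} (Ω : Set (Euc N)) (u : Euc N → ℝ) : Prop :=
  ContDiff ℝ (⊤ : ℕ∞) u ∧ HasCompactSupport u ∧ tsupport u ⊆ Ω

/-- The fractional principal frequency `λ^s_{p,q}(Ω)`. -/
def lam (N : ℕ) (p q s : ℝ) (Ω : Set (Euc N)) : ℝ :=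
  sInf { c | ∃ u : Euc N → ℝ, TestOn Ω u ∧ (∫ x in Ω, |u x| ^ q) = 1 ∧ c = gag N p s u }

/-- The homogeneous relative `(s,p)`-capacity of `A` in `E`. -/
def fcap (N : ℕ) (p s : ℝ) (A E : Set (Euc N)) : ℝ :=
  sInf { c | ∃ φ : Euc N → ℝ, TestOn E φ ∧ (∀ x ∈ A, 1 ≤ φ x) ∧ c = gag N p s φ }

/-- The fractional `s`-perimeter of a set `A ⊆ ℝ^N`. -/
def sPer (N : ℕ) (s : ℝ) (A : Set (Euc N)) : ℝ :=
  ∫ z : Euc N × Euc N,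
    |A.indicator (fun _ => (1 : ℝ)) z.1 - A.indicator (fun _ => (1 : ℝ)) z.2| /
      ‖z.1 - z.2‖ ^ ((N : ℝ) + s)

/-- An open set with smooth boundary, described as a regular sublevel set of a smooth function. -/
def SmoothBdry {N : ℕ} (O : Set (Euc N)) : Prop :=
  ∃ f : Euc N → ℝ, ContDiff ℝ (⊤ : ℕ∞) f ∧ O = {x | f x < 0} ∧ ∀ x, f x = 0 → fderiv ℝ f x ≠ 0

/-- The sharp constant in the fractional Sobolev inequality. -/
def sobConst (N : ℕ) (p s : ℝ) : ℝ :=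
  sSup {c | ∃ u : Euc N → ℝ, TestOn Set.univ u ∧ gag N p s u = 1 ∧
    c = (∫ x, |u x| ^ ((N : ℝ) * p / (N - s * p))) ^ (((N : ℝ) - s * p) / N)}

/-- Membership in `W̃^{s,p}_0(Ω)`, the closure of `C^∞_0(Ω)` in `W^{s,p}(ℝ^N)`. -/
def MemW0 (N : ℕ) (p s : ℝ) (Ω : Set (Euc N)) (V : Euc N → ℝ) : Prop :=
  ∃ u : ℕ → Euc N → ℝ, (∀ n, TestOn Ω (u n)) ∧
    Filter.Tendsto (fun n => (∫ x, |u n x - V x| ^ p) + gag N p s (fun x => u n x - V x))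
      Filter.atTop (nhds 0)

/-- The relative (local) `p`-capacity of `A` in `E`. -/
def pcap (N : ℕ) (p : ℝ) (A E : Set (Euc N)) : ℝ :=
  sInf { c | ∃ φ : Euc N → ℝ, TestOn E φ ∧ (∀ x ∈ A, 1 ≤ φ x) ∧
    c = ∫ x in E, ‖fderiv ℝ φ x‖ ^ p }

/-- The sharp constant in the local `p`-Poincaré inequality on `E`. -/
def lamLoc (N : ℕ) (p : ℝ) (E : Set (Euc N)) : ℝ :=
  sInf { c | ∃ u : Euc N → ℝ, TestOn E u ∧ (∫ x in E, |u x| ^ p) = 1 ∧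
    c = ∫ x in E, ‖fderiv ℝ u x‖ ^ p }

/-- The compact set `A ⊆ closure (B_r(x0))` is `(s,p,γ)`-negligible. -/
def Negligible (N : ℕ) (p s γ : ℝ) (x0 : Euc N) (r : ℝ) (A : Set (Euc N)) : Prop :=
  fcap N p s A (ball x0 (2 * r)) ≤ γ * fcap N p s (closedBall x0 r) (ball x0 (2 * r))

/-- The fractional `(p,γ)`-capacitary inradius of order `s` of `Ω` (valued in `ℝ≥0∞`). -/
def capInr (N : ℕ) (p s γ : ℝ) (Ω : Set (Euc N)) : ℝ≥0∞ :=
  sSup {R | ∃ r : ℝ, 0 < r ∧ R = ENNReal.ofReal r ∧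
    ∃ x0 : Euc N, Negligible N p s γ x0 r (closedBall x0 r \ Ω)}

end


section
variable {N : ℕ}

/-- difference kernel -/
noncomputable def dd (u : Euc N → ℝ) (p : ℝ) (x y : Euc N) : ℝ≥0∞ := ENNReal.ofReal (|u x - u y| ^ p)
/-- Gagliardo kernel -/
noncomputable def kk (u : Euc N → ℝ) (p a : ℝ) (x y : Euc N) : ℝ≥0∞ :=
  ENNReal.ofReal (|u x - u y| ^ p / ‖x - y‖ ^ a)

lemma dd_symm (u : Euc N → ℝ) (p : ℝ) (x y : Euc N) : dd u p x y = dd u p y x := by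
  simp [dd, abs_sub_comm]
lemma kk_symm (u : Euc N → ℝ) (p a : ℝ) (x y : Euc N) : kk u p a x y = kk u p a y x := by
  simp [kk, abs_sub_comm, norm_sub_rev]

lemma dd_meas {u : Euc N → ℝ} (hu : Continuous u) (p : ℝ) :
    Measurable (fun z : Euc N × Euc N => dd u p z.1 z.2) := by
  have := hu.measurable
  unfold dd
  fun_prop
lemma kk_meas {u : Euc N → ℝ} (hu : Continuous u) (p a : ℝ) :
    Measurable (fun z : Euc N × Euc N => kk u p a z.1 z.2) := by
  have := hu.measurable
  unfold kk
  fun_prop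

lemma real_tri {p : ℝ} (hp : 1 ≤ p) (a b c : ℝ) :
    |a - c| ^ p ≤ 2 ^ (p - 1) * (|a - b| ^ p + |b - c| ^ p) := by
  have h := NNReal.rpow_add_le_mul_rpow_add_rpow (‖a-b‖₊) (‖b-c‖₊) hp
  have h' : (|a-b| + |b-c|) ^ p ≤ 2 ^ (p - 1) * (|a - b| ^ p + |b - c| ^ p) := by
    exact_mod_cast h
  refine le_trans ?_ h'
  gcongr
  exact abs_sub_le a b c

lemma dd_tri {p : ℝ} (hp : 1 ≤ p) (u : Euc N → ℝ) (x y z : Euc N) :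
    dd u p x y ≤ ENNReal.ofReal (2 ^ (p - 1)) * (dd u p x z + dd u p y z) := by
  rw [dd_symm u p y z]
  unfold dd
  rw [← ENNReal.ofReal_add (by positivity) (by positivity), ← ENNReal.ofReal_mul (by positivity)]
  exact ENNReal.ofReal_le_ofReal (real_tri hp _ _ _)

lemma lint_half (x : Euc N) {f : Euc N → ℝ≥0∞} (hf : Measurable f) :
    ∫⁻ y, f ((1/2 : ℝ) • (x + y)) = 2 ^ N * ∫⁻ z, f z := by
  rw [lintegral_add_left_eq_self (fun y => f ((1/2 : ℝ) • y)) x]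
  rw [← lintegral_map hf (measurable_const_smul (1/2 : ℝ)),
    Measure.map_addHaar_smul volume (by norm_num : (1/2 : ℝ) ≠ 0), lintegral_smul_measure]
  congr 1
  simp

lemma lint_swap {B : Set (Euc N)} {f : Euc N → Euc N → ℝ≥0∞}
    (hf : Measurable (fun z : Euc N × Euc N => f z.1 z.2)) :
    ∫⁻ x in B, ∫⁻ y in B, f y x = ∫⁻ x in B, ∫⁻ y in B, f x y := by
  rw [lintegral_lintegral_swap]
  exact (hf.comp measurable_swap).aemeasurable

lemma lint_sym_add {B : Set (Euc N)} {F : Euc N → Euc N → ℝ≥0∞}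
    (hF : Measurable (fun z : Euc N × Euc N => F z.1 z.2)) {c : ℝ≥0∞} (hc : c ≠ ⊤) :
    ∫⁻ x in B, ∫⁻ y in B, c * (F x y + F y x) = c * (2 * ∫⁻ x in B, ∫⁻ y in B, F x y) := by
  rw [two_mul]
  nth_rw 2 [← lint_swap (B := B) hF]
  rw [← lintegral_add_left (by exact hF.lintegral_prod_right'), ← lintegral_const_mul' _ _ hc]
  refine lintegral_congr fun x => ?_
  rw [lintegral_const_mul' _ _ hc, lintegral_add_left]
  exact hF.comp (measurable_prodMk_left)

/-- truncated energy -/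
noncomputable def GG (u : Euc N → ℝ) (p a : ℝ) (B : Set (Euc N)) (ρ : ℝ) : ℝ≥0∞ :=
  ∫⁻ x in B, ∫⁻ y in B, if ‖x - y‖ < ρ then kk u p a x y else 0

lemma kk_mid {p a : ℝ} (hp : 1 ≤ p) (u : Euc N → ℝ) (x y m : Euc N)
    (hm : m = (1/2 : ℝ) • (x + y)) :
    kk u p a x y ≤ ENNReal.ofReal (2 ^ (p - 1 - a)) * (kk u p a x m + kk u p a y m) := by
  have h1 : ‖x - m‖ = ‖x - y‖ / 2 := by
    have : x - m = (1/2 : ℝ) • (x - y) := by rw [hm]; module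
    rw [this, norm_smul]; norm_num; ring
  have h2 : ‖y - m‖ = ‖x - y‖ / 2 := by
    have : y - m = (-1/2 : ℝ) • (x - y) := by rw [hm]; module
    rw [this, norm_smul]; norm_num; ring
  unfold kk
  rw [← ENNReal.ofReal_add (by positivity) (by positivity), ← ENNReal.ofReal_mul (by positivity)]
  apply ENNReal.ofReal_le_ofReal
  have := real_tri hp (u x) (u m) (u y)
  rw [h1, h2, Real.div_rpow (norm_nonneg _) (by norm_num), Real.rpow_sub (by norm_num : (0:ℝ) < 2),
    abs_sub_comm (u y) (u m)]
  have e : (2:ℝ) ^ (p - 1) / 2 ^ a * (|u x - u m| ^ p / (‖x - y‖ ^ a / 2 ^ a) +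
      |u m - u y| ^ p / (‖x - y‖ ^ a / 2 ^ a)) =
      (2 ^ (p - 1) * (|u x - u m| ^ p + |u m - u y| ^ p)) / ‖x - y‖ ^ a := by
    have : (2:ℝ)^a ≠ 0 := by positivity
    field_simp
  rw [e]
  gcongr

lemma GG_half {p s : ℝ} (hp : 1 ≤ p) {u : Euc N → ℝ} (hu : Continuous u) {B : Set (Euc N)}
    (hB : Convex ℝ B) (hBm : MeasurableSet B) (ρ : ℝ) :
    GG u p (N + s * p) B ρ ≤ ENNReal.ofReal (2 ^ (p * (1 - s))) * GG u p (N + s * p) B (ρ / 2) := by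
  set a : ℝ := N + s * p with ha
  let g : Euc N → Euc N → ℝ≥0∞ := fun x z => if ‖x - z‖ < ρ/2 then kk u p a x z else 0
  have hg : Measurable (fun z : Euc N × Euc N => g z.1 z.2) := by
    refine Measurable.ite ?_ (kk_meas hu p a) measurable_const
    exact measurableSet_lt (by fun_prop) measurable_const
  let g' : Euc N → Euc N → ℝ≥0∞ := fun x => B.indicator (g x)
  have hg' : Measurable (fun z : Euc N × Euc N => g' z.1 z.2) := by
    have : (fun z : Euc N × Euc N => g' z.1 z.2) =
      (Prod.snd ⁻¹' B).indicator (fun z : Euc N × Euc N => g z.1 z.2) := by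
      ext z; simp only [g', Set.indicator]; rfl
    rw [this]
    exact hg.indicator (measurable_snd hBm)
  have hpt : ∀ x ∈ B, ∀ y ∈ B, (if ‖x - y‖ < ρ then kk u p a x y else 0) ≤
      ENNReal.ofReal (2 ^ (p - 1 - a)) *
        (g' x ((1/2 : ℝ) • (x + y)) + g' y ((1/2 : ℝ) • (y + x))) := by
    intro x hx y hy
    rw [add_comm y x]
    split_ifs with h
    · have hm : (1/2 : ℝ) • (x + y) ∈ B := by
        rw [smul_add]; exact hB hx hy (by norm_num) (by norm_num) (by norm_num)
      have h1 : ‖x - (1/2 : ℝ) • (x + y)‖ < ρ / 2 := by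
        have : x - (1/2 : ℝ) • (x + y) = (1/2 : ℝ) • (x - y) := by module
        rw [this, norm_smul]; norm_num; linarith
      have h2 : ‖y - (1/2 : ℝ) • (x + y)‖ < ρ / 2 := by
        have : y - (1/2 : ℝ) • (x + y) = (-1/2 : ℝ) • (x - y) := by module
        rw [this, norm_smul]; norm_num; linarith
      simp only [g', Set.indicator_of_mem hm, g, if_pos h1, if_pos h2]
      exact kk_mid hp u x y _ rfl
    · exact zero_le
  let F : Euc N → Euc N → ℝ≥0∞ := fun x y => g' x ((1/2 : ℝ) • (x + y))
  have hF : Measurable (fun z : Euc N × Euc N => F z.1 z.2) := by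
    exact hg'.comp (g := fun z : Euc N × Euc N => g' z.1 z.2) (f := fun z : Euc N × Euc N => (z.1, (1/2 : ℝ) • (z.1 + z.2))) (by fun_prop)
  have hF' : Measurable (fun z : Euc N × Euc N => F z.2 z.1) := hF.comp measurable_swap
  have hFle : ∫⁻ x in B, ∫⁻ y in B, F x y ≤ 2 ^ N * GG u p a B (ρ / 2) := by
    unfold GG
    rw [← lintegral_const_mul' _ _ (by simp)]
    refine lintegral_mono fun x => ?_
    refine (setLIntegral_le_lintegral _ _).trans ?_
    have hx : Measurable (g' x) := hg'.comp (measurable_prodMk_left)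
    change ∫⁻ y, g' x ((1/2 : ℝ) • (x + y)) ≤ _
    rw [lint_half x hx]
    rw [lintegral_indicator hBm]
  calc GG u p a B ρ ≤ ∫⁻ x in B, ∫⁻ y in B, ENNReal.ofReal (2 ^ (p - 1 - a)) * (F x y + F y x) := by
        unfold GG
        refine setLIntegral_mono' hBm fun x hx => ?_
        exact setLIntegral_mono' hBm fun y hy => hpt x hx y hy
    _ = ENNReal.ofReal (2 ^ (p - 1 - a)) * (2 * ∫⁻ x in B, ∫⁻ y in B, F x y) := by
        exact lint_sym_add hF (by simp)
    _ ≤ ENNReal.ofReal (2 ^ (p - 1 - a)) * (2 * (2 ^ N * GG u p a B (ρ / 2))) := by gcongr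
    _ = _ := by
        rw [← mul_assoc 2, ← mul_assoc]
        congr 1
        rw [show (2 : ℝ≥0∞) * 2 ^ N = ENNReal.ofReal (2 * 2 ^ N) by
          rw [ENNReal.ofReal_mul (by norm_num), ENNReal.ofReal_pow (by norm_num)]; simp,
          ← ENNReal.ofReal_mul (by positivity)]
        congr 1
        rw [← Real.rpow_natCast, ← Real.rpow_one_add' (by norm_num) (by positivity), ← Real.rpow_add (by norm_num)]
        congr 1
        rw [ha]; ring

end

section
variable {N : ℕ}

lemma vol_ball_pos (x0 : Euc N) {r : ℝ} (hr : 0 < r) : volume (ball x0 r) ≠ 0 :=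
  (measure_ball_pos _ _ hr).ne'

lemma vol_ball (hN : 0 < N) (x0 : Euc N) {r : ℝ} (hr : 0 ≤ r) :
    volume (ball x0 r) = ENNReal.ofReal (r ^ N) * volume (ball (0 : Euc N) 1) := by
  have : Nonempty (Fin N) := ⟨⟨0, hN⟩⟩
  rw [Measure.addHaar_ball _ _ hr]; simp

lemma far_set (hN : 0 < N) (x0 x y : Euc N) {r : ℝ} (hr : 0 < r) :
    volume (ball x0 r) ≤ 2 * volume (ball x0 r \ (ball x (r/4) ∪ ball y (r/4))) := by
  have hV : volume (ball x0 r) ≠ ⊤ := measure_ball_lt_top.ne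
  have h4 : ∀ z : Euc N, 4 * volume (ball z (r/4)) ≤ volume (ball x0 r) := by
    intro z
    rw [vol_ball hN z (by positivity), vol_ball hN x0 hr.le, ← mul_assoc]
    gcongr
    rw [show (4:ℝ≥0∞) = ENNReal.ofReal 4 by simp, ← ENNReal.ofReal_mul (by norm_num)]
    apply ENNReal.ofReal_le_ofReal
    rw [div_pow]
    have : (4:ℝ) ≤ 4 ^ N := le_self_pow₀ (by norm_num) (by omega)
    rw [mul_div_assoc', div_le_iff₀ (by positivity), mul_comm]
    gcongr
  set S := ball x0 r \ (ball x (r/4) ∪ ball y (r/4))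
  have h1 : volume (ball x0 r) ≤ volume S + (volume (ball x (r/4)) + volume (ball y (r/4))) := by
    calc _ ≤ volume (S ∪ (ball x (r/4) ∪ ball y (r/4))) := by
          apply measure_mono; intro z hz
          by_cases h : z ∈ ball x (r/4) ∪ ball y (r/4)
          · exact Or.inr h
          · exact Or.inl ⟨hz, h⟩
      _ ≤ _ := (measure_union_le _ _).trans (by gcongr; exact measure_union_le _ _)
  have hx := h4 x
  have hy := h4 y
  have hS : volume S ≠ ⊤ := ne_top_of_le_ne_top hV (measure_mono Set.sdiff_subset)
  have hbx : volume (ball x (r/4)) ≠ ⊤ := measure_ball_lt_top.ne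
  have hby : volume (ball y (r/4)) ≠ ⊤ := measure_ball_lt_top.ne
  lift volume (ball x0 r) to NNReal using hV with V
  lift volume S to NNReal using hS with S'
  lift volume (ball x (r/4)) to NNReal using hbx with X
  lift volume (ball y (r/4)) to NNReal using hby with Y
  norm_cast at *
  have h1' : (V:ℝ) ≤ S' + (X + Y) := by exact_mod_cast h1
  have h2' : (4:ℝ) * X ≤ V := by exact_mod_cast hx
  have h3' : (4:ℝ) * Y ≤ V := by exact_mod_cast hy
  have : (V:ℝ) ≤ 2 * S' := by linarith
  exact_mod_cast this

/-- far part of the kernel -/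
noncomputable def far (ρ : ℝ) (f : Euc N → Euc N → ℝ≥0∞) (x y : Euc N) : ℝ≥0∞ :=
  if ‖x - y‖ < ρ then 0 else f x y

lemma far_meas {ρ : ℝ} {f : Euc N → Euc N → ℝ≥0∞}
    (hf : Measurable (fun z : Euc N × Euc N => f z.1 z.2)) :
    Measurable (fun z : Euc N × Euc N => far ρ f z.1 z.2) :=
  Measurable.ite (measurableSet_lt (by fun_prop) measurable_const) measurable_const hf

lemma meas_sec {f : Euc N → Euc N → ℝ≥0∞}
    (hf : Measurable (fun z : Euc N × Euc N => f z.1 z.2)) (x : Euc N) :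
    Measurable (fun y => f x y) :=
  Measurable.comp (g := fun z : Euc N × Euc N => f z.1 z.2) (f := fun y => (x, y)) hf
    measurable_prodMk_left

lemma meas_int {f : Euc N → Euc N → ℝ≥0∞} {μ : Measure (Euc N)} [SFinite μ]
    (hf : Measurable (fun z : Euc N × Euc N => f z.1 z.2)) :
    Measurable (fun x => ∫⁻ y, f x y ∂μ) :=
  Measurable.lintegral_prod_right' (f := fun z : Euc N × Euc N => f z.1 z.2) hf

lemma lint_fst {B : Set (Euc N)} {H : Euc N → ℝ≥0∞} (hH : Measurable H) :
    ∫⁻ x in B, ∫⁻ _y in B, H x = (∫⁻ x in B, H x) * volume B := by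
  simp only [setLIntegral_const]
  rw [lintegral_mul_const _ hH]

lemma far_est (hN : 0 < N) {p : ℝ} (hp : 1 ≤ p) {u : Euc N → ℝ} (hu : Continuous u)
    (x0 : Euc N) {r : ℝ} (hr : 0 < r) :
    ∫⁻ x in ball x0 r, ∫⁻ y in ball x0 r, dd u p x y ≤
      ENNReal.ofReal (2 ^ (p + 1)) *
        ∫⁻ x in ball x0 r, ∫⁻ y in ball x0 r, far (r/4) (dd u p) x y := by
  set B := ball x0 r with hB
  have hBm : MeasurableSet B := measurableSet_ball
  have hfm := far_meas (ρ := r/4) (dd_meas hu p)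
  let H : Euc N → ℝ≥0∞ := fun x => ∫⁻ y in B, far (r/4) (dd u p) x y
  have hH : Measurable H := meas_int hfm
  have hHF : Measurable (fun z : Euc N × Euc N => (fun x _ => H x : Euc N → Euc N → ℝ≥0∞) z.1 z.2) :=
    hH.comp measurable_fst
  have hpt : ∀ x y, volume B * dd u p x y ≤
      2 * (ENNReal.ofReal (2 ^ (p - 1))) * (H x + H y) := by
    intro x y
    calc volume B * dd u p x y
        ≤ 2 * volume (B \ (ball x (r/4) ∪ ball y (r/4))) * dd u p x y := by
          gcongr; exact far_set hN x0 x y hr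
      _ = 2 * ∫⁻ z in (B \ (ball x (r/4) ∪ ball y (r/4))), dd u p x y := by
          rw [setLIntegral_const]; ring
      _ ≤ 2 * ∫⁻ z in (B \ (ball x (r/4) ∪ ball y (r/4))), ENNReal.ofReal (2 ^ (p - 1)) *
            (far (r/4) (dd u p) x z + far (r/4) (dd u p) y z) := by
          gcongr 2 * ?_
          refine setLIntegral_mono' (hBm.diff (measurableSet_ball.union measurableSet_ball)) ?_
          intro z hz
          have h1 : ¬ ‖x - z‖ < r/4 := fun h => hz.2 (Or.inl (by
            rwa [mem_ball, dist_eq_norm, norm_sub_rev]))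
          have h2 : ¬ ‖y - z‖ < r/4 := fun h => hz.2 (Or.inr (by
            rwa [mem_ball, dist_eq_norm, norm_sub_rev]))
          simp only [far, if_neg h1, if_neg h2]
          exact dd_tri hp u x y z
      _ ≤ 2 * ∫⁻ z in B, ENNReal.ofReal (2 ^ (p - 1)) *
            (far (r/4) (dd u p) x z + far (r/4) (dd u p) y z) := by
          gcongr 2 * ?_
          exact lintegral_mono_set Set.sdiff_subset
      _ = _ := by
          rw [lintegral_const_mul' _ _ (by simp), lintegral_add_left, mul_assoc]
          exact meas_sec hfm _
  have h := calc
    volume B * ∫⁻ x in B, ∫⁻ y in B, dd u p x y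
    _ = ∫⁻ x in B, ∫⁻ y in B, volume B * dd u p x y := by
        have hV : volume B ≠ ⊤ := measure_ball_lt_top.ne
        rw [← lintegral_const_mul' _ _ hV]
        exact lintegral_congr fun x => by rw [lintegral_const_mul' _ _ hV]
    _ ≤ ∫⁻ x in B, ∫⁻ y in B, 2 * (ENNReal.ofReal (2 ^ (p - 1))) * (H x + H y) :=
        lintegral_mono fun x => lintegral_mono fun y => hpt x y
    _ = 2 * (ENNReal.ofReal (2 ^ (p - 1))) * (2 * ∫⁻ x in B, ∫⁻ _y in B, H x) :=
        lint_sym_add hHF (ENNReal.mul_ne_top (by simp) (by simp))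
    _ = volume B * (ENNReal.ofReal (2 ^ (p + 1)) * ∫⁻ x in B, H x) := by
        rw [lint_fst hH, show p + 1 = (p - 1) + 2 by ring, Real.rpow_add (by norm_num),
          ENNReal.ofReal_mul (by positivity)]
        norm_num
        ring
  exact (ENNReal.mul_le_mul_iff_right (vol_ball_pos x0 hr) measure_ball_lt_top.ne).1 h

lemma far_kk {p a : ℝ} (ha : 0 ≤ a) (u : Euc N → ℝ) (x0 : Euc N) {r : ℝ} (hr : 0 < r) :
    ∫⁻ x in ball x0 r, ∫⁻ y in ball x0 r, far (r/4) (dd u p) x y ≤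
      ENNReal.ofReal ((2 * r) ^ a) *
        ∫⁻ x in ball x0 r, ∫⁻ y in ball x0 r, far (r/4) (kk u p a) x y := by
  rw [← lintegral_const_mul' _ _ (by simp)]
  refine setLIntegral_mono' measurableSet_ball fun x hx => ?_
  rw [← lintegral_const_mul' _ _ (by simp)]
  refine setLIntegral_mono' measurableSet_ball fun y hy => ?_
  unfold far
  split_ifs with h
  · simp
  · have h2 : ‖x - y‖ ≤ 2 * r := by
      rw [mem_ball] at hx hy
      rw [← dist_eq_norm]
      linarith [dist_triangle_right x y x0]
    have h3 : 0 < ‖x - y‖ := by linarith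
    unfold dd kk
    rw [← ENNReal.ofReal_mul (by positivity)]
    apply ENNReal.ofReal_le_ofReal
    rw [mul_div_assoc', le_div_iff₀ (by positivity), mul_comm]
    gcongr

lemma near_est {p s : ℝ} (hp : 1 ≤ p) (hs1 : s < 1) {u : Euc N → ℝ} (hu : Continuous u)
    (x0 : Euc N) {r : ℝ} (hr : 0 < r)
    (hfin : ∫⁻ x in ball x0 r, ∫⁻ y in ball x0 r, kk u p (N + s * p) x y ≠ ⊤) :
    ∫⁻ x in ball x0 r, ∫⁻ y in ball x0 r, far (r/4) (kk u p (N + s * p)) x y ≤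
     ENNReal.ofReal (3 * p * (1 - s)) *
      ∫⁻ x in ball x0 r, ∫⁻ y in ball x0 r, kk u p (N + s * p) x y := by
  set a : ℝ := N + s * p with ha
  set B := ball x0 r with hB
  have hBm : MeasurableSet B := measurableSet_ball
  have hBc : Convex ℝ B := convex_ball x0 r
  set G := ∫⁻ x in B, ∫⁻ y in B, kk u p a x y with hG
  set E := ∫⁻ x in B, ∫⁻ y in B, far (r/4) (kk u p a) x y with hE
  have hfm := far_meas (ρ := r/4) (kk_meas hu p a)
  have hsum : G = E + GG u p a B (r/4) := by
    unfold GG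
    rw [hE, ← lintegral_add_left (by exact meas_int hfm)]
    refine lintegral_congr fun x => ?_
    rw [← lintegral_add_left (by exact meas_sec hfm _)]
    refine lintegral_congr fun y => ?_
    unfold far
    split_ifs <;> simp
  have hG2 : G ≤ GG u p a B (2 * r) := by
    unfold GG
    refine setLIntegral_mono' hBm fun x hx => ?_
    refine setLIntegral_mono' hBm fun y hy => ?_
    rw [if_pos]
    rw [hB, mem_ball] at hx hy
    rw [← dist_eq_norm]
    linarith [dist_triangle_right x y x0]
  set c := ENNReal.ofReal (2 ^ (p * (1 - s))) with hc
  have hle : G ≤ c * (c * (c * GG u p a B (r/4))) := by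
    refine hG2.trans ((GG_half hp hu hBc hBm _).trans ?_)
    gcongr c * ?_
    refine (GG_half hp hu hBc hBm _).trans ?_
    gcongr c * ?_
    refine (GG_half hp hu hBc hBm _).trans ?_
    rw [show 2 * r / 2 / 2 / 2 = r / 4 by ring]
  have hEf : E ≠ ⊤ := ne_top_of_le_ne_top hfin (by rw [hsum]; exact le_self_add)
  have hRf : GG u p a B (r/4) ≠ ⊤ := ne_top_of_le_ne_top hfin (by rw [hsum]; exact le_add_self)
  have hle' : G.toReal ≤ 2 ^ (3 * p * (1 - s)) * (GG u p a B (r/4)).toReal := by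
    have := ENNReal.toReal_mono (ENNReal.mul_ne_top ENNReal.ofReal_ne_top
      (ENNReal.mul_ne_top ENNReal.ofReal_ne_top (ENNReal.mul_ne_top ENNReal.ofReal_ne_top hRf))) hle
    simp only [ENNReal.toReal_mul] at this
    rw [ENNReal.toReal_ofReal (by positivity)] at this
    rw [show 3 * p * (1 - s) = p * (1 - s) + (p * (1 - s) + p * (1 - s)) by ring,
      Real.rpow_add (by norm_num), Real.rpow_add (by norm_num)]
    linarith
  have hsum' : G.toReal = E.toReal + (GG u p a B (r/4)).toReal := by
    rw [hsum, ENNReal.toReal_add hEf hRf]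
  have ht : 0 ≤ 3 * p * (1 - s) := by nlinarith
  rw [← ENNReal.ofReal_toReal hEf, ← ENNReal.ofReal_toReal hfin, ← ENNReal.ofReal_mul ht]
  apply ENNReal.ofReal_le_ofReal
  set t := 3 * p * (1 - s)
  have hexp : 1 - t ≤ 2 ^ (-t) := by
    rw [Real.rpow_def_of_pos (by norm_num)]
    have h1 := Real.add_one_le_exp (Real.log 2 * -t)
    have h2 : Real.log 2 ≤ 1 := by linarith [Real.log_two_lt_d9]
    nlinarith
  have hR : 2 ^ (-t) * G.toReal ≤ (GG u p a B (r/4)).toReal := by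
    rw [Real.rpow_neg (by norm_num), inv_mul_le_iff₀ (by positivity)]
    exact hle'
  have hG0 : 0 ≤ G.toReal := ENNReal.toReal_nonneg
  nlinarith

end

section
variable {N : ℕ}

/-- radial tail -/
lemma tail_real (hN : 0 < N) {t r : ℝ} (ht : 0 < t) (hr : 0 < r) :
    IntegrableOn (fun y : Euc N => ‖y‖ ^ (-((N : ℝ) + t))) (ball 0 r)ᶜ ∧
    ∫ y in (ball (0 : Euc N) r)ᶜ, ‖y‖ ^ (-((N : ℝ) + t)) =
      N * (volume.real (ball (0 : Euc N) 1) * (r ^ (-t) / t)) := by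
  have : Nonempty (Fin N) := ⟨⟨0, hN⟩⟩
  let f : ℝ → ℝ := (Set.Ici r).indicator (fun y => y ^ (-((N : ℝ) + t)))
  have hf : (fun y : Euc N => f ‖y‖) =
      (ball (0 : Euc N) r)ᶜ.indicator (fun y => ‖y‖ ^ (-((N : ℝ) + t))) := by
    ext y; simp [f, Set.indicator]
  have hm : MeasurableSet (ball (0 : Euc N) r)ᶜ := measurableSet_ball.compl
  have hpt : ∀ y ∈ Set.Ioi (0:ℝ), y ^ (Module.finrank ℝ (Euc N) - 1) • f y =
      (Set.Ici r).indicator (fun y => y ^ (-1 - t)) y := by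
    intro y hy
    simp only [f, Set.indicator]
    split_ifs with h
    · have hy' : 0 < y := hy
      rw [finrank_euclideanSpace_fin, smul_eq_mul, ← Real.rpow_natCast, ← Real.rpow_add hy']
      congr 1
      rw [Nat.cast_sub (by omega)]; push_cast; ring
    · simp
  have hsub : Set.Ici r ⊆ Set.Ioi (0:ℝ) := fun y hy => lt_of_lt_of_le hr hy
  constructor
  · rw [← integrable_indicator_iff hm, ← hf, integrable_fun_norm_addHaar volume (f := f)]
    rw [integrableOn_congr_fun hpt measurableSet_Ioi]
    have h1 : IntegrableOn (fun y : ℝ => y ^ (-1 - t)) (Set.Ici r) := by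
      rw [integrableOn_Ici_iff_integrableOn_Ioi]
      exact integrableOn_Ioi_rpow_of_lt (by linarith) hr
    exact ((integrable_indicator_iff measurableSet_Ici).2 h1).integrableOn
  · rw [← integral_indicator hm, ← hf, integral_fun_norm_addHaar volume f,
      setIntegral_congr_fun measurableSet_Ioi hpt, setIntegral_indicator measurableSet_Ici,
      Set.inter_eq_right.2 hsub, integral_Ici_eq_integral_Ioi,
      integral_Ioi_rpow_of_lt (by linarith) hr, finrank_euclideanSpace_fin]
    simp only [nsmul_eq_mul, smul_eq_mul]
    rw [show -1 - t + 1 = -t by ring]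
    congr 2
    rw [div_neg, neg_div, neg_neg]

lemma tail_lint (hN : 0 < N) {t r : ℝ} (ht : 0 < t) (hr : 0 < r) (x0 : Euc N) :
    ∫⁻ y in (ball x0 r)ᶜ, ENNReal.ofReal (‖y - x0‖ ^ (-((N : ℝ) + t))) =
      ENNReal.ofReal (N * (volume.real (ball (0 : Euc N) 1) * (r ^ (-t) / t))) := by
  obtain ⟨h1, h2⟩ := tail_real hN ht hr
  rw [← h2, ofReal_integral_eq_lintegral_ofReal h1 (ae_of_all _ fun y => by positivity)]
  rw [← lintegral_indicator measurableSet_ball.compl, ← lintegral_indicator measurableSet_ball.compl]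
  rw [← lintegral_sub_right_eq_self (Set.indicator (ball (0 : Euc N) r)ᶜ _) x0]
  refine lintegral_congr fun y => ?_
  simp [Set.indicator, dist_eq_norm]

lemma tail_est {p a : ℝ} (hp : 1 ≤ p) (ha : 0 ≤ a) {u : Euc N → ℝ} (hu : Continuous u)
    (x0 : Euc N) {r : ℝ} (hr : 0 < r) :
    (∫⁻ y in (ball x0 r)ᶜ, ENNReal.ofReal (‖y - x0‖ ^ (-a))) *
      ∫⁻ x in ball x0 r, ∫⁻ y in ball x0 r, dd u p x y ≤
      ENNReal.ofReal (2 ^ (p + a)) * volume (ball x0 r) *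
        ∫⁻ x in ball x0 r, ∫⁻ y, kk u p a x y := by
  set B := ball x0 r with hB
  have hBm : MeasurableSet B := measurableSet_ball
  have hkm := kk_meas hu p a
  have hdm := dd_meas hu p
  let H : Euc N → ℝ≥0∞ := fun x => ∫⁻ y, kk u p a x y
  have hH : Measurable H := meas_int hkm
  have hHF : Measurable (fun z : Euc N × Euc N => (fun x _ => H x : Euc N → Euc N → ℝ≥0∞) z.1 z.2) :=
    hH.comp measurable_fst
  have h1 : ∀ x ∈ B, ∀ y ∈ Bᶜ, ENNReal.ofReal (‖y - x0‖ ^ (-a)) * dd u p x y ≤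
      ENNReal.ofReal (2 ^ a) * kk u p a x y := by
    intro x hx y hy
    rw [hB, mem_ball, dist_eq_norm] at hx
    have hy' : r ≤ ‖y - x0‖ := by
      simpa [hB, dist_eq_norm] using hy
    have h2 : ‖x - y‖ ≤ 2 * ‖y - x0‖ := by
      have := norm_sub_le (x - x0) (y - x0)
      rw [sub_sub_sub_cancel_right] at this
      linarith
    have h3 : 0 < ‖x - y‖ := by
      rw [norm_pos_iff, sub_ne_zero]; rintro rfl; linarith
    have h4 : 0 < ‖y - x0‖ := by linarith
    unfold dd kk
    rw [← ENNReal.ofReal_mul (by positivity), ← ENNReal.ofReal_mul (by positivity)]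
    apply ENNReal.ofReal_le_ofReal
    have h5 : ‖x - y‖ ^ a ≤ 2 ^ a * ‖y - x0‖ ^ a := by
      rw [← Real.mul_rpow (by norm_num) h4.le]; gcongr
    rw [Real.rpow_neg h4.le, inv_mul_le_iff₀ (by positivity), mul_div_assoc', mul_div_assoc',
      le_div_iff₀ (by positivity)]
    have : 0 ≤ |u x - u y| ^ p := by positivity
    nlinarith
  set J := ∫⁻ y in Bᶜ, ENNReal.ofReal (‖y - x0‖ ^ (-a)) with hJ
  set c := ENNReal.ofReal (2 ^ (p - 1)) * ENNReal.ofReal (2 ^ a) with hc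
  have hcf : c ≠ ⊤ := ENNReal.mul_ne_top ENNReal.ofReal_ne_top ENNReal.ofReal_ne_top
  have hpt : ∀ x ∈ B, ∀ z ∈ B, J * dd u p x z ≤ c * (H x + H z) := by
    intro x hx z hz
    calc J * dd u p x z = ∫⁻ y in Bᶜ, ENNReal.ofReal (‖y - x0‖ ^ (-a)) * dd u p x z := by
          rw [lintegral_mul_const _ (by fun_prop)]
      _ ≤ ∫⁻ y in Bᶜ, c * (kk u p a x y + kk u p a z y) := by
          refine setLIntegral_mono' hBm.compl fun y hy => ?_
          calc _ ≤ ENNReal.ofReal (‖y - x0‖ ^ (-a)) *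
                  (ENNReal.ofReal (2 ^ (p - 1)) * (dd u p x y + dd u p z y)) := by
                gcongr; exact dd_tri hp u x z y
            _ = ENNReal.ofReal (2 ^ (p - 1)) * (ENNReal.ofReal (‖y - x0‖ ^ (-a)) * dd u p x y +
                  ENNReal.ofReal (‖y - x0‖ ^ (-a)) * dd u p z y) := by ring
            _ ≤ ENNReal.ofReal (2 ^ (p - 1)) * (ENNReal.ofReal (2 ^ a) * kk u p a x y +
                  ENNReal.ofReal (2 ^ a) * kk u p a z y) := by
                gcongr ENNReal.ofReal (2 ^ (p - 1)) * (?_ + ?_)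
                · exact h1 x hx y hy
                · exact h1 z hz y hy
            _ = _ := by rw [hc]; ring
      _ ≤ ∫⁻ y, c * (kk u p a x y + kk u p a z y) := setLIntegral_le_lintegral _ _
      _ = _ := by
          rw [lintegral_const_mul' _ _ hcf, lintegral_add_left (meas_sec hkm x)]
  calc
    J * ∫⁻ x in B, ∫⁻ y in B, dd u p x y
    _ = ∫⁻ x in B, ∫⁻ y in B, J * dd u p x y := by
        rw [← lintegral_const_mul _ (meas_int hdm)]
        exact lintegral_congr fun x => by rw [lintegral_const_mul _ (meas_sec hdm x)]
    _ ≤ ∫⁻ x in B, ∫⁻ y in B, c * (H x + H y) :=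
        setLIntegral_mono' hBm fun x hx => setLIntegral_mono' hBm fun y hy => hpt x hx y hy
    _ = c * (2 * ∫⁻ x in B, ∫⁻ _y in B, H x) := lint_sym_add hHF hcf
    _ = ENNReal.ofReal (2 ^ (p + a)) * volume B * ∫⁻ x in B, H x := by
        rw [lint_fst hH, show p + a = (p - 1) + a + 1 by ring, Real.rpow_add (by norm_num),
          Real.rpow_add (by norm_num), ENNReal.ofReal_mul (by positivity),
          ENNReal.ofReal_mul (by positivity), hc]
        norm_num
        ring

lemma jensen {p : ℝ} (hp : 1 ≤ p) {u : Euc N → ℝ} (hu : Continuous u)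
    (x0 : Euc N) {r : ℝ} (hr : 0 < r) :
    volume (ball x0 r) * ∫⁻ x in ball x0 r, ENNReal.ofReal
       (|u x - (volume (ball x0 r)).toReal⁻¹ * ∫ y in ball x0 r, u y| ^ p) ≤
      ∫⁻ x in ball x0 r, ∫⁻ y in ball x0 r, dd u p x y := by
  have hV0 := vol_ball_pos x0 hr
  have hVf : volume (ball x0 r) ≠ ⊤ := measure_ball_lt_top.ne
  rw [← lintegral_const_mul' _ _ hVf]
  refine lintegral_mono fun x => ?_
  have hcont : ∀ f : Euc N → ℝ, Continuous f → IntegrableOn f (ball x0 r) := fun f hf =>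
    (hf.continuousOn.integrableOn_compact (isCompact_closedBall x0 r)).mono_set ball_subset_closedBall
  have hV : 0 < (volume (ball x0 r)).toReal := ENNReal.toReal_pos hV0 hVf
  have hpc : Continuous fun y => |u x - u y| ^ p :=
    (by fun_prop : Continuous fun y => |u x - u y|).rpow_const (fun _ => Or.inr (by linarith))
  have hav : u x - (volume (ball x0 r)).toReal⁻¹ * ∫ y in ball x0 r, u y =
      (volume (ball x0 r)).toReal⁻¹ * ∫ y in ball x0 r, (u x - u y) := by
    rw [integral_sub (hcont _ continuous_const) (hcont _ hu)]
    simp only [integral_const, MeasurableSet.univ, measureReal_restrict_apply, Set.univ_inter,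
      smul_eq_mul]
    rw [Measure.real]
    field_simp
  have hle : |u x - (volume (ball x0 r)).toReal⁻¹ * ∫ y in ball x0 r, u y| ≤
      ⨍ y in ball x0 r, |u x - u y| := by
    rw [hav, abs_mul, abs_of_pos (inv_pos.2 hV), setAverage_eq, smul_eq_mul, Measure.real]
    gcongr
    exact abs_integral_le_integral_abs
  have hj : (⨍ y in ball x0 r, |u x - u y|) ^ p ≤ ⨍ y in ball x0 r, |u x - u y| ^ p :=
    (convexOn_rpow hp).map_set_average_le
      (fun t _ => (Real.continuousAt_rpow_const t p (Or.inr (by linarith))).continuousWithinAt)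
      isClosed_Ici hV0 hVf (ae_of_all _ fun y => Set.mem_Ici.2 (abs_nonneg _))
      (hcont _ (by fun_prop)) (hcont _ hpc)
  have h3 : |u x - (volume (ball x0 r)).toReal⁻¹ * ∫ y in ball x0 r, u y| ^ p ≤
     (volume (ball x0 r)).toReal⁻¹ * ∫ y in ball x0 r, |u x - u y| ^ p := by
    refine le_trans (by gcongr) (hj.trans ?_)
    rw [setAverage_eq, smul_eq_mul, Measure.real]
  calc _ ≤ volume (ball x0 r) * ENNReal.ofReal
        ((volume (ball x0 r)).toReal⁻¹ * ∫ y in ball x0 r, |u x - u y| ^ p) := by gcongr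
    _ = ENNReal.ofReal (∫ y in ball x0 r, |u x - u y| ^ p) := by
        nth_rw 1 [← ENNReal.ofReal_toReal hVf]
        rw [← ENNReal.ofReal_mul hV.le]
        congr 1; field_simp
    _ ≤ _ := by
        rw [ofReal_integral_eq_lintegral_ofReal (hcont _ hpc)
          (ae_of_all _ fun y => by positivity)]
        rfl

lemma fin_est (hN : 0 < N) {p s : ℝ} (hp : 1 ≤ p) (hs : 0 < s) (hs1 : s < 1) {u : Euc N → ℝ}
    (hu : TestOn (Set.univ : Set (Euc N)) u) :
    ∃ C : ℝ≥0∞, C ≠ ⊤ ∧ ∀ x, ∫⁻ y, kk u p (N + s * p) x y ≤ C := by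
  have : Nonempty (Fin N) := ⟨⟨0, hN⟩⟩
  obtain ⟨hu1, hu2, -⟩ := hu
  obtain ⟨L, hL⟩ := ContDiff.lipschitzWith_of_hasCompactSupport hu2 hu1 (by simp)
  obtain ⟨M, hM⟩ := hu2.exists_bound_of_continuous hu1.continuous
  have hM0 : 0 ≤ M := (norm_nonneg _).trans (hM 0)
  set a : ℝ := N + s * p with ha
  have hsp : 0 < s * p := by positivity
  have ha0 : 0 < a := by positivity
  let f : Euc N → ℝ := fun h => (L:ℝ) ^ p * ‖h‖ ^ (-(a - p))
  let g : Euc N → ℝ := fun h => (2 * M) ^ p * ‖h‖ ^ (-a)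
  have hf : IntegrableOn f (ball 0 1) := by
    refine integrableOn_ball_of_norm_le_rpow (by simp; omega) (C := (L:ℝ)^p) (α := a - p) ?_ ?_ ?_
    · simp [ha]; nlinarith
    · refine ae_of_all _ fun x => ?_
      rw [Real.norm_of_nonneg (by positivity)]
    · exact Measurable.aestronglyMeasurable (by fun_prop)
  have hg : IntegrableOn g (ball 0 1)ᶜ := ((tail_real hN hsp one_pos).1).const_mul _
  refine ⟨(∫⁻ h in ball 0 1, ENNReal.ofReal (f h)) + ∫⁻ h in (ball 0 1)ᶜ, ENNReal.ofReal (g h),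
    ENNReal.add_ne_top.2 ⟨hf.lintegral_lt_top.ne, hg.lintegral_lt_top.ne⟩, fun x => ?_⟩
  rw [← lintegral_add_left_eq_self _ x, ← lintegral_add_compl _ (measurableSet_ball (x := (0 : Euc N)) (ε := 1))]
  have hnn : ∀ h : Euc N, ‖x - (x + h)‖ = ‖h‖ := fun h => by simp
  gcongr ?_ + ?_
  · refine setLIntegral_mono' measurableSet_ball fun h hh => ENNReal.ofReal_le_ofReal ?_
    rw [hnn]
    by_cases h0 : h = 0
    · subst h0
      simp only [add_zero, sub_self, abs_zero]
      rw [Real.zero_rpow (by linarith), zero_div]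
      positivity
    have hpos : 0 < ‖h‖ := norm_pos_iff.2 h0
    have h1 : |u x - u (x + h)| ≤ L * ‖h‖ := by
      have := hL.dist_le_mul x (x + h)
      rwa [Real.dist_eq, dist_eq_norm, hnn] at this
    have h2 : |u x - u (x + h)| ^ p ≤ L ^ p * ‖h‖ ^ p := by
      rw [← Real.mul_rpow (by positivity) (by positivity)]
      gcongr
    simp only [f]
    rw [neg_sub, Real.rpow_sub hpos, mul_div_assoc']
    gcongr
  · refine setLIntegral_mono' measurableSet_ball.compl fun h hh => ENNReal.ofReal_le_ofReal ?_
    rw [hnn]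
    simp only [g]
    rw [Real.rpow_neg (norm_nonneg _), ← div_eq_mul_inv]
    gcongr
    have := abs_sub (u x) (u (x + h))
    have h1 := hM x
    have h2 := hM (x + h)
    rw [Real.norm_eq_abs] at h1 h2
    linarith

end

lemma core_est (N : ℕ) (hN : 0 < N) {p s : ℝ} (hp : 1 ≤ p) (hs : 0 < s) (hs1 : s < 1)
    (x0 : Euc N) {r : ℝ} (hr : 0 < r) {u : Euc N → ℝ} (hu : Continuous u) {X T : ℝ≥0∞}
    (hX : X = ∫⁻ x in ball x0 r, ENNReal.ofReal
       (|u x - (volume (ball x0 r)).toReal⁻¹ * ∫ y in ball x0 r, u y| ^ p))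
    (hT : T = ∫⁻ x in ball x0 r, ∫⁻ y, kk u p (N + s * p) x y) (hTf : T ≠ ⊤) :
    X.toReal ≤ 2 * (2 ^ (N + 2 * p + 1) * (3 * p) / volume.real (ball (0 : Euc N) 1)) *
      (s * (1 - s)) * r ^ (s * p) * T.toReal := by
  set ω := volume.real (ball (0 : Euc N) 1) with hω
  have hω0 : 0 < ω := ENNReal.toReal_pos (vol_ball_pos 0 one_pos) measure_ball_lt_top.ne
  have hsp : 0 < s * p := by positivity
  have hspp : s * p ≤ p := by nlinarith
  set a : ℝ := N + s * p with ha
  have ha0 : 0 < a := by positivity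
  set V := volume (ball x0 r) with hV
  have hV0 : V ≠ 0 := vol_ball_pos x0 hr
  have hVf : V ≠ ⊤ := measure_ball_lt_top.ne
  have hJ := jensen hp hu x0 hr
  rw [← hX] at hJ
  set A := ∫⁻ x in ball x0 r, ∫⁻ y in ball x0 r, dd u p x y with hA
  have hT0 : 0 ≤ T.toReal := ENNReal.toReal_nonneg
  have hv : V.toReal = r ^ N * ω := by
    rw [hV, vol_ball hN x0 hr.le, ENNReal.toReal_mul, ENNReal.toReal_ofReal (by positivity)]; rfl
  -- the factor `s`
  have e1 : X.toReal ≤ 2 ^ (N + 2 * p + 1) * (3 * p) / ω * s * r ^ (s * p) * T.toReal := by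
    have h1 := tail_est hp ha0.le hu x0 hr
    rw [← hT, tail_lint hN hsp hr x0] at h1
    set j : ℝ := N * (ω * (r ^ (-(s * p)) / (s * p))) with hj
    have hj0 : 0 ≤ j := by positivity
    have h2 : V * (ENNReal.ofReal j * X) ≤ V * (ENNReal.ofReal (2 ^ (p + a)) * T) := by
      calc _ = ENNReal.ofReal j * (V * X) := by ring
        _ ≤ ENNReal.ofReal j * A := by gcongr
        _ ≤ _ := h1
        _ = _ := by ring
    have h3 := (ENNReal.mul_le_mul_iff_right hV0 hVf).1 h2
    have h4 := ENNReal.toReal_mono (ENNReal.mul_ne_top ENNReal.ofReal_ne_top hTf) h3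
    rw [ENNReal.toReal_mul, ENNReal.toReal_mul, ENNReal.toReal_ofReal hj0,
      ENNReal.toReal_ofReal (by positivity)] at h4
    have hN1 : (1:ℝ) ≤ N := by exact_mod_cast hN
    have h5 : ω * (r ^ (-(s * p)) / (s * p)) * X.toReal ≤ 2 ^ (p + a) * T.toReal := by
      refine le_trans ?_ h4
      gcongr
      rw [hj]
      exact le_mul_of_one_le_left (by positivity) hN1
    have h6 : (2:ℝ) ^ (p + a) ≤ 2 ^ (N + 2 * p + 1) * 3 := by
      have : (2:ℝ) ^ (p + a) ≤ 2 ^ (N + 2 * p + 1) :=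
        Real.rpow_le_rpow_of_exponent_le (by norm_num) (by rw [ha]; linarith)
      have h0 : (0:ℝ) < 2 ^ (N + 2 * p + 1) := by positivity
      linarith
    have h7 : ω * (r ^ (-(s * p)) / (s * p)) * X.toReal ≤ 2 ^ (N + 2 * p + 1) * 3 * T.toReal :=
      h5.trans (by gcongr)
    rw [Real.rpow_neg hr.le] at h7
    have hR : 0 < r ^ (s * p) := by positivity
    have h8 : X.toReal = (ω * ((r ^ (s * p))⁻¹ / (s * p)) * X.toReal) *
        (r ^ (s * p) * (s * p) / ω) := by
      field_simp
    rw [h8]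
    calc _ ≤ (2 ^ (N + 2 * p + 1) * 3 * T.toReal) * (r ^ (s * p) * (s * p) / ω) := by gcongr
      _ = _ := by ring
  -- the factor `1 - s`
  have e2 : X.toReal ≤ 2 ^ (N + 2 * p + 1) * (3 * p) / ω * (1 - s) * r ^ (s * p) * T.toReal := by
    have hle : ∫⁻ x in ball x0 r, ∫⁻ y in ball x0 r, kk u p a x y ≤ T := by
      rw [hT]
      exact lintegral_mono fun x => setLIntegral_le_lintegral _ _
    have h1 := near_est hp hs1 hu x0 hr (ne_top_of_le_ne_top hTf hle)
    have h2 := far_kk (p := p) ha0.le u x0 hr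
    have h3 := far_est hN hp hu x0 hr
    have h4 : V * X ≤ ENNReal.ofReal (2 ^ (p + 1)) * (ENNReal.ofReal ((2 * r) ^ a) *
        (ENNReal.ofReal (3 * p * (1 - s)) * T)) := by
      refine hJ.trans (h3.trans ?_)
      gcongr ENNReal.ofReal (2 ^ (p + 1)) * ?_
      refine h2.trans ?_
      gcongr ENNReal.ofReal ((2 * r) ^ a) * ?_
      exact h1.trans (by gcongr)
    have h5 := ENNReal.toReal_mono (ENNReal.mul_ne_top ENNReal.ofReal_ne_top
      (ENNReal.mul_ne_top ENNReal.ofReal_ne_top (ENNReal.mul_ne_top ENNReal.ofReal_ne_top hTf))) h4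
    have hs' : 0 < 1 - s := by linarith
    simp only [ENNReal.toReal_mul] at h5
    rw [ENNReal.toReal_ofReal (by positivity), ENNReal.toReal_ofReal (by positivity),
      ENNReal.toReal_ofReal (by positivity), hv, Real.mul_rpow (by norm_num) hr.le, ha,
      Real.rpow_add hr, Real.rpow_natCast] at h5
    have h6 : (2:ℝ) ^ (p + 1) * 2 ^ (N + s * p) ≤ 2 ^ (N + 2 * p + 1) := by
      rw [← Real.rpow_add (by norm_num)]
      exact Real.rpow_le_rpow_of_exponent_le (by norm_num) (by linarith)
    have h7 : X.toReal = (r ^ N * ω * X.toReal) / (r ^ N * ω) := by field_simp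
    rw [h7, div_le_iff₀ (by positivity)]
    refine h5.trans ?_
    calc _ = ((2:ℝ) ^ (p + 1) * 2 ^ (N + s * p)) * (r ^ N * r ^ (s * p) * (3 * p * (1 - s) * T.toReal)) := by
          ring
      _ ≤ 2 ^ (N + 2 * p + 1) * (r ^ N * r ^ (s * p) * (3 * p * (1 - s) * T.toReal)) := by gcongr
      _ = _ := by field_simp
  set D := 2 ^ (N + 2 * p + 1) * (3 * p) / ω with hD
  have hD0 : 0 ≤ D * r ^ (s * p) * T.toReal := by positivity
  rcases le_total s (1/2) with h | h
  · have : D * r ^ (s * p) * T.toReal * s ≤ D * r ^ (s * p) * T.toReal * (2 * (s * (1 - s))) := by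
      gcongr; nlinarith
    linarith
  · have : D * r ^ (s * p) * T.toReal * (1 - s) ≤
        D * r ^ (s * p) * T.toReal * (2 * (s * (1 - s))) := by
      gcongr; nlinarith
    linarith

theorem stmt14 (N : ℕ) (hN : 0 < N) (p : ℝ) (hp : 1 ≤ p) :
    ∃ W > 0, ∀ s : ℝ, 0 < s → s < 1 → ∀ (x0 : Euc N) (r : ℝ), 0 < r →
      ∀ u : Euc N → ℝ, TestOn (Set.univ : Set (Euc N)) u →
        (∫ x in ball x0 r,
            |u x - (volume (ball x0 r)).toReal⁻¹ * ∫ y in ball x0 r, u y| ^ p) ≤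
          W * (s * (1 - s)) * r ^ (s * p) *
            ∫ x in ball x0 r, ∫ y, |u x - u y| ^ p / ‖x - y‖ ^ ((N : ℝ) + s * p) := by
  have hω0 : 0 < volume.real (ball (0 : Euc N) 1) :=
    ENNReal.toReal_pos (vol_ball_pos 0 one_pos) measure_ball_lt_top.ne
  refine ⟨2 * (2 ^ (N + 2 * p + 1) * (3 * p) / volume.real (ball (0 : Euc N) 1)),
    by positivity, ?_⟩
  intro s hs hs1 x0 r hr u hu
  obtain ⟨C, hC, hCb⟩ := fin_est hN hp hs hs1 hu
  have huc : Continuous u := hu.1.continuous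
  have hum := huc.measurable
  have hTf : ∫⁻ x in ball x0 r, ∫⁻ y, kk u p (N + s * p) x y ≠ ⊤ := by
    refine ne_top_of_le_ne_top ?_ (lintegral_mono fun x => hCb x)
    rw [setLIntegral_const]
    exact ENNReal.mul_ne_top hC measure_ball_lt_top.ne
  have h := core_est N hN hp hs hs1 x0 hr huc rfl rfl hTf
  have e1 : ∀ x, ∫ y, |u x - u y| ^ p / ‖x - y‖ ^ ((N : ℝ) + s * p) =
      (∫⁻ y, kk u p (N + s * p) x y).toReal := fun x => by
    rw [integral_eq_lintegral_of_nonneg_ae (ae_of_all _ fun y => by positivity)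
      (Measurable.aestronglyMeasurable (by fun_prop))]
    rfl
  have e2 : ∫ x in ball x0 r, ∫ y, |u x - u y| ^ p / ‖x - y‖ ^ ((N : ℝ) + s * p) =
      (∫⁻ x in ball x0 r, ∫⁻ y, kk u p (N + s * p) x y).toReal := by
    simp only [e1]
    refine integral_toReal (meas_int (kk_meas huc p _)).aemeasurable
      (ae_of_all _ fun x => lt_of_le_of_lt (hCb x) hC.lt_top)
  rw [e2, integral_eq_lintegral_of_nonneg_ae (ae_of_all _ fun y => by positivity)
      (Measurable.aestronglyMeasurable (by fun_prop))]
  exact h
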